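/- arXiv:1904.11916 — 7 statements merged into one kernel-verified Lean document; each statement's English description precedes it below -/
import Mathlib

section
/- Let F > 0 and c > 0 be real constants and let λ_n, u_n, g be real numbers. Set b := F·(−λ_n + c·(u_n − g)). Then −λ_n − (1/F)·max{0, b} = 0 if and only if the three nonpenetration conditions hold: u_n − g ≤ 0, λ_n·(u_n − g) = 0, and λ_n ≤ 0. -/
/-- The nonlinear complementary function `C_n` vanishes if and only if the three
nonpenetration contact conditions hold. -/
theorem complementary_function_iff_nonpenetration
    (F c lamn un g : ℝ) (hF : 0 < F) (hc : 0 < c) :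
    (-lamn - (1 / F) * max 0 (F * (-lamn + c * (un - g))) = 0) ↔
      (un - g ≤ 0 ∧ lamn * (un - g) = 0 ∧ lamn ≤ 0) := by
  have key : (1 / F) * max 0 (F * (-lamn + c * (un - g))) = max 0 (-lamn + c * (un - g)) := by
    have h : max 0 (F * (-lamn + c * (un - g))) = F * max 0 (-lamn + c * (un - g)) := by
      rw [mul_max_of_nonneg _ _ hF.le, mul_zero]
    rw [h, ← mul_assoc, one_div, inv_mul_cancel₀ hF.ne', one_mul]
  rw [key]
  generalize un - g = d
  constructor
  · intro h
    rcases le_total (-lamn + c * d) 0 with hb | hb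
    · rw [max_eq_left hb] at h
      have hl : lamn = 0 := by linarith
      subst hl
      refine ⟨?_, by simp, le_refl _⟩
      by_contra hd
      have := mul_pos hc (not_le.mp hd)
      linarith
    · rw [max_eq_right hb] at h
      have hcd : c * d = 0 := by linarith
      have hd : d = 0 := (mul_eq_zero.mp hcd).resolve_left hc.ne'
      subst hd
      refine ⟨le_refl _, by simp, by linarith⟩
  · rintro ⟨hd, hm, hl⟩
    rcases mul_eq_zero.mp hm with h | h
    · subst h
      have := mul_nonneg hc.le (neg_nonneg.mpr hd)
      rw [max_eq_left (by linarith)]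
      simp
    · subst h
      rw [max_eq_right (by linarith)]
      ring
end

section
/- Let n ≥ 1, let ℝⁿ carry the Euclidean norm ‖·‖, and let F > 0, c > 0 be real constants. Let λ_n, u_n, g be real numbers and λ_τ, v ∈ ℝⁿ. Set b := F·(−λ_n + c·(u_n − g)), w := −λ_τ + c·v, C_n := −λ_n − (1/F)·max{0, b}, and C_τ := max{b, ‖w‖}·(−λ_τ) − max{0, b}·w. Assume the nonpenetration conditions hold: u_n − g ≤ 0, λ_n·(u_n − g) = 0, λ_n ≤ 0; and assume the Coulomb friction conditions hold: ‖λ_τ‖ ≤ F·|λ_n|; if ‖λ_τ‖ < F·|λ_n| then v = 0; and if ‖λ_τ‖ = F·|λ_n| then there exists ζ ∈ ℝ with λ_τ = −ζ²·v. Then C_n = 0 and C_τ = 0 (in ℝⁿ). -/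
/-- If the nonpenetration conditions and the Coulomb friction conditions hold, then both
nonlinear complementary functions `C_n` and `C_τ` vanish. -/
theorem contact_conditions_imply_complementary_functions_vanish
    (n : ℕ) (hn : 1 ≤ n) (F c : ℝ) (hF : 0 < F) (hc : 0 < c)
    (lamn un g : ℝ) (lamτ v : EuclideanSpace ℝ (Fin n))
    (b : ℝ) (hb : b = F * (-lamn + c * (un - g)))
    (w : EuclideanSpace ℝ (Fin n)) (hw : w = -lamτ + c • v)
    (hpen1 : un - g ≤ 0) (hpen2 : lamn * (un - g) = 0) (hpen3 : lamn ≤ 0)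
    (hfric1 : ‖lamτ‖ ≤ F * |lamn|)
    (hfric2 : ‖lamτ‖ < F * |lamn| → v = 0)
    (hfric3 : ‖lamτ‖ = F * |lamn| → ∃ ζ : ℝ, lamτ = -(ζ ^ 2) • v) :
    (-lamn - (1 / F) * max 0 b = 0) ∧
      (max b ‖w‖ • (-lamτ) - max 0 b • w = 0) := by
  rcases eq_or_lt_of_le hpen3 with h0 | h0
  · have hb0 : b ≤ 0 := by
      rw [hb, h0]
      have h1 : c * (un - g) ≤ 0 := mul_nonpos_of_nonneg_of_nonpos hc.le hpen1
      have h2 : F * (c * (un - g)) ≤ 0 := mul_nonpos_of_nonneg_of_nonpos hF.le h1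
      simpa using h2
    have hl : lamτ = 0 := by
      rw [h0] at hfric1
      simpa using hfric1
    rw [max_eq_left hb0, h0, hl]
    simp
  · have hg : un - g = 0 := by
      rcases mul_eq_zero.mp hpen2 with h | h
      · exact absurd h h0.ne
      · exact h
    have hbe : b = F * |lamn| := by
      rw [hb, hg, abs_of_neg h0]; ring
    have hbe2 : b = F * (-lamn) := by
      rw [hb, hg]; ring
    have hbpos : 0 ≤ b := by rw [hbe]; positivity
    rw [max_eq_right hbpos]
    constructor
    · rw [hbe2]; field_simp; ring
    · rw [← hbe] at hfric1 hfric2 hfric3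
      rcases eq_or_lt_of_le hfric1 with h | h
      · obtain ⟨z, hz⟩ := hfric3 h
        have hw2 : w = (z ^ 2 + c) • v := by
          rw [hw, hz]; module
        have hnw : ‖w‖ = (z ^ 2 + c) * ‖v‖ := by
          rw [hw2, norm_smul, Real.norm_of_nonneg (by positivity)]
        have hnb : b = z ^ 2 * ‖v‖ := by
          rw [← h, hz, norm_smul, norm_neg, Real.norm_of_nonneg (by positivity)]
        have hle : b ≤ ‖w‖ := by
          rw [hnw, hnb]
          have := mul_nonneg hc.le (norm_nonneg v)
          linarith
        rw [max_eq_right hle, hnw, hnb, hw2, hz]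
        module
      · have hv := hfric2 h
        have hw2 : w = -lamτ := by rw [hw, hv]; simp
        rw [hw2, norm_neg, max_eq_left h.le, sub_self]
end

section
/- Let n ≥ 1, let ℝⁿ carry the Euclidean norm ‖·‖, and let c > 0 be a real constant. Let b > 0 be real and λ_τ, v ∈ ℝⁿ. Set w := −λ_τ + c·v and C_τ := max{b, ‖w‖}·(−λ_τ) − max{0, b}·w. If ‖w‖ > b and C_τ = 0, then ‖λ_τ‖ = b and λ_τ = −(b·c/(‖w‖ − b))·v; in particular there exists ζ > 0 with λ_τ = −ζ·v (the sliding case, with tangential traction antiparallel to the sliding direction). -/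
/-- Sliding case: if `‖w‖ > b` and the tangential complementary function `C_τ`
vanishes, then the tangential traction is at the friction bound and is antiparallel to
the sliding velocity. -/
theorem complementary_function_sliding_case
    (n : ℕ) (hn : 1 ≤ n) (c : ℝ) (hc : 0 < c)
    (b : ℝ) (hb : 0 < b) (lamτ v : EuclideanSpace ℝ (Fin n))
    (w : EuclideanSpace ℝ (Fin n)) (hw : w = -lamτ + c • v)
    (hwb : b < ‖w‖)
    (hC : max b ‖w‖ • (-lamτ) - max 0 b • w = 0) :
    ‖lamτ‖ = b ∧ lamτ = -(b * c / (‖w‖ - b)) • v ∧ ∃ ζ : ℝ, 0 < ζ ∧ lamτ = -ζ • v := by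
  rw [max_eq_right hwb.le, max_eq_right hb.le] at hC
  have hE := sub_eq_zero.mp hC
  have hpos : 0 < ‖w‖ := hb.trans hwb
  have hd : 0 < ‖w‖ - b := sub_pos.mpr hwb
  have hlin : (‖w‖ - b) • lamτ = -(b * c) • v := by
    have h2 : ‖w‖ • (-lamτ) = b • (-lamτ + c • v) := by rw [← hw]; exact hE
    generalize ‖w‖ = r at h2
    have h3 : r • lamτ = -(b • (-lamτ + c • v)) := by rw [← h2]; simp
    rw [sub_smul, h3]
    module
  have hl : lamτ = -(b * c / (‖w‖ - b)) • v := by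
    have h4 : lamτ = (‖w‖ - b)⁻¹ • ((‖w‖ - b) • lamτ) := by
      rw [smul_smul, inv_mul_cancel₀ hd.ne', one_smul]
    rw [hlin, smul_smul] at h4
    rw [h4]
    congr 1
    ring
  refine ⟨?_, hl, b * c / (‖w‖ - b), by positivity, hl⟩
  have hN := congrArg norm hE
  rw [norm_smul, norm_smul, norm_neg, norm_norm, Real.norm_of_nonneg hb.le, mul_comm] at hN
  exact mul_right_cancel₀ hpos.ne' hN
end

section
/- Let n ≥ 1, let ℝⁿ carry the Euclidean norm ‖·‖, and let F > 0, c > 0 be real constants. Let λ_n, u_n, g be real numbers and λ_τ, v ∈ ℝⁿ. Set b := F·(−λ_n + c·(u_n − g)), w := −λ_τ + c·v, C_n := −λ_n − (1/F)·max{0, b}, and C_τ := max{b, ‖w‖}·(−λ_τ) − max{0, b}·w. Assume b > 0. Then C_n = 0 and C_τ = 0 if and only if all of the following hold: u_n = g, λ_n = −b/F (so λ_n < 0), and either (v = 0 and ‖λ_τ‖ ≤ F·|λ_n|) or (there exists ζ > 0 with λ_τ = −ζ·v and ‖λ_τ‖ = F·|λ_n|). -/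
/-- In the case of active contact (positive friction bound `b`), the complementary
functions `C_n` and `C_τ` both vanish if and only if contact holds (`u_n = g`,
`λ_n = -b/F < 0`) and either the subface is sticking (`v = 0` with the tangential
traction within the friction bound) or sliding (tangential traction antiparallel to `v`
and at the friction bound). -/
theorem complementary_functions_iff_active_contact
    (n : ℕ) (hn : 1 ≤ n) (F c : ℝ) (hF : 0 < F) (hc : 0 < c)
    (lamn un g : ℝ) (lamτ v : EuclideanSpace ℝ (Fin n))
    (b : ℝ) (hb : b = F * (-lamn + c * (un - g)))
    (w : EuclideanSpace ℝ (Fin n)) (hw : w = -lamτ + c • v)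
    (hbpos : 0 < b) :
    ((-lamn - (1 / F) * max 0 b = 0) ∧
        (max b ‖w‖ • (-lamτ) - max 0 b • w = 0)) ↔
      (un = g ∧ lamn = -b / F ∧
        ((v = 0 ∧ ‖lamτ‖ ≤ F * |lamn|) ∨
          ((∃ ζ : ℝ, 0 < ζ ∧ lamτ = -ζ • v) ∧ ‖lamτ‖ = F * |lamn|))) := by
  rw [max_eq_right hbpos.le]
  have hn1 : (-lamn - (1 / F) * b = 0) ↔ lamn = -b / F := by
    constructor
    · intro h
      have : lamn = -(1 / F * b) := by linarith
      rw [this]; ring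
    · intro h
      rw [h]; ring
  have key : lamn = -b / F → un = g ∧ F * |lamn| = b := by
    intro h
    have h1 : F * lamn = -b := by rw [h]; field_simp
    have hneg : lamn < 0 := by
      rw [h]; exact div_neg_of_neg_of_pos (by linarith) hF
    constructor
    · have h2 : F * c * (un - g) = 0 := by nlinarith
      have h3 : un - g = 0 := by
        rcases mul_eq_zero.mp h2 with h4 | h4
        · exact absurd h4 (mul_pos hF hc).ne'
        · exact h4
      linarith
    · rw [abs_of_neg hneg]; linarith
  have tau : (max b ‖w‖ • (-lamτ) - b • w = 0) ↔
      ((v = 0 ∧ ‖lamτ‖ ≤ b) ∨ ((∃ ζ : ℝ, 0 < ζ ∧ lamτ = -ζ • v) ∧ ‖lamτ‖ = b)) := by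
    constructor
    · intro h
      have h0 := sub_eq_zero.mp h
      rcases le_or_gt ‖w‖ b with hle | hlt
      · left
        rw [max_eq_left hle] at h0
        have h1 : -lamτ = w := smul_right_injective _ hbpos.ne' h0
        constructor
        · have h2 : c • v = 0 := by
            have h3 := h1.trans hw
            simpa using h3
          exact (smul_eq_zero.mp h2).resolve_left hc.ne'
        · rw [← norm_neg, h1]; exact hle
      · right
        rw [max_eq_right hlt.le] at h0
        have hwpos : 0 < ‖w‖ := hbpos.trans hlt
        have hd : 0 < ‖w‖ - b := by linarith
        constructor
        · refine ⟨b * c / (‖w‖ - b), by positivity, ?_⟩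
          apply smul_right_injective _ hd.ne'
          simp only
          rw [smul_smul]
          have e : (‖w‖ - b) * -(b * c / (‖w‖ - b)) = -(b * c) := by field_simp
          rw [e]
          have h4 : ‖w‖ • (-lamτ) = b • (-lamτ + c • v) := by rw [← hw]; exact h0
          generalize ‖w‖ = r at h4
          have h5 : r • lamτ = -(b • (-lamτ + c • v)) := by rw [← h4]; module
          rw [sub_smul, h5]; module
        · have h1 := congrArg norm h0
          rw [norm_smul, norm_smul, norm_neg, norm_norm, Real.norm_of_nonneg hbpos.le,
            mul_comm b] at h1
          exact mul_left_cancel₀ hwpos.ne' h1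
    · rintro (⟨hv, hl⟩ | ⟨⟨ζ, hζ, hl⟩, hnorm⟩)
      · have h1 : w = -lamτ := by rw [hw, hv]; simp
        have h2 : ‖w‖ ≤ b := by rw [h1, norm_neg]; exact hl
        rw [max_eq_left h2, h1, sub_self]
      · have hv : v = (ζ⁻¹) • (-lamτ) := by
          rw [hl, neg_smul, neg_neg, smul_smul, inv_mul_cancel₀ hζ.ne', one_smul]
        have h1 : w = (1 + c * ζ⁻¹) • (-lamτ) := by
          rw [hw, hv]; module
        have hp : 0 < c * ζ⁻¹ := by positivity
        have h2 : ‖w‖ = (1 + c * ζ⁻¹) * b := by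
          rw [h1, norm_smul, norm_neg, hnorm, Real.norm_of_nonneg (by positivity)]
        have h3 : b ≤ ‖w‖ := by rw [h2]; nlinarith
        rw [max_eq_right h3, h2, h1]; module
  rw [hn1, tau]
  constructor
  · rintro ⟨h1, h2⟩
    obtain ⟨h3, h4⟩ := key h1
    rw [h4]
    exact ⟨h3, h1, h2⟩
  · rintro ⟨_, h1, h2⟩
    obtain ⟨_, h4⟩ := key h1
    rw [h4] at h2
    exact ⟨h1, h2⟩
end

section
/- Let n ≥ 1, let ℝⁿ carry the Euclidean norm ‖·‖ and inner product ⟨·,·⟩, and let c > 0 be a real constant. Let b > 0 be real and λ_τ, v ∈ ℝⁿ with λ_τ ≠ 0 and ‖λ_τ‖ ≤ b. Set w := −λ_τ + c·v. Suppose either v = 0, or there exists ζ > 0 with λ_τ = −ζ·v. Then w ≠ 0, and: (i) α := ⟨−λ_τ, w⟩/(‖λ_τ‖·‖w‖) = 1; (ii) consequently the regularization parameter β, defined as β := 1/(1 − α·δ) if α < 0 and β := 1 otherwise (for any real δ), equals 1; and (iii) the regularized matrix Q̃ := (−λ_τ)·wᵀ/(max{b, ‖λ_τ‖}·‖w‖)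 coincides with the unregularized matrix Q := (−λ_τ)·wᵀ/(b·‖w‖). -/
open scoped RealInnerProductSpace

/-- At any pair satisfying the Coulomb friction conditions (sticking, or sliding with
tangential traction antiparallel to the velocity) with `λ_τ ≠ 0` and `‖λ_τ‖ ≤ b`, the
regularization of the semismooth Newton method is inactive: `w ≠ 0`, `α = 1`,
the regularization scaling `β` equals `1` (for any `δ`), and the regularized matrix
`Q̃` coincides with the unregularized matrix `Q`. -/
theorem regularization_inactive_at_friction_solution
    (n : ℕ) (hn : 1 ≤ n) (c : ℝ) (hc : 0 < c)
    (b : ℝ) (hb : 0 < b) (lamτ v : EuclideanSpace ℝ (Fin n))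
    (hlam : lamτ ≠ 0) (hlamb : ‖lamτ‖ ≤ b)
    (w : EuclideanSpace ℝ (Fin n)) (hw : w = -lamτ + c • v)
    (hcase : v = 0 ∨ ∃ ζ : ℝ, 0 < ζ ∧ lamτ = -ζ • v)
    (α : ℝ) (hα : α = ⟪-lamτ, w⟫ / (‖lamτ‖ * ‖w‖))
    (β : ℝ → ℝ) (hβ : ∀ δ : ℝ, β δ = if α < 0 then 1 / (1 - α * δ) else 1)
    (Q Qreg : Matrix (Fin n) (Fin n) ℝ)
    (hQ : Q = (1 / (b * ‖w‖)) •
      Matrix.vecMulVec (fun i => (-lamτ) i) (fun j => w j))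
    (hQreg : Qreg = (1 / (max b ‖lamτ‖ * ‖w‖)) •
      Matrix.vecMulVec (fun i => (-lamτ) i) (fun j => w j)) :
    w ≠ 0 ∧ α = 1 ∧ (∀ δ : ℝ, β δ = 1) ∧ Qreg = Q := by
  have key : ∃ k : ℝ, 0 < k ∧ w = k • (-lamτ) := by
    rcases hcase with h | ⟨ζ, hζ, h⟩
    · exact ⟨1, one_pos, by simp [hw, h]⟩
    · refine ⟨1 + c / ζ, by positivity, ?_⟩
      rw [hw, h, ← sub_eq_zero]
      have : c / ζ * ζ = c := by field_simp
      have h2 : -(-ζ • v) + c • v - (1 + c / ζ) • -(-ζ • v) = (c - c / ζ * ζ) • v := by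
        module
      rw [h2, this, sub_self, zero_smul]
  obtain ⟨k, hk, hwk⟩ := key
  have hl : 0 < ‖lamτ‖ := norm_pos_iff.mpr hlam
  have hα1 : α = 1 := by
    rw [hα, hwk, inner_smul_right, real_inner_self_eq_norm_sq, norm_smul, norm_neg,
      Real.norm_of_nonneg hk.le]
    field_simp
  refine ⟨?_, hα1, ?_, ?_⟩
  · rw [hwk]
    exact smul_ne_zero hk.ne' (neg_ne_zero.mpr hlam)
  · intro δ
    rw [hβ, hα1, if_neg (by norm_num)]
  · rw [hQreg, hQ, max_eq_left hlamb]
end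

section
/- Let n ≥ 1, let ℝⁿ carry the Euclidean norm ‖·‖, and let c > 0 be a real constant. Let v ∈ ℝⁿ with v ≠ 0, let ζ > 0, set λ_τ := −ζ·v, and set b := ‖λ_τ‖ = ζ·‖v‖ (so b > 0). Set w := −λ_τ + c·v, Q := (−λ_τ)·wᵀ/(b·‖w‖), e := b/‖w‖, and M := e·(I − Q), where I is the n × n identity matrix. Then I − M is invertible, and the matrix L := c·((I − M)⁻¹ − I) satisfies L = ζ·(I − v·vᵀ/‖v‖²). In particular, L is symmetric and positive semidefinite, L·v = 0, and L·x = ζ·x for every x orthogonal to v. -/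
open scoped RealInnerProductSpace
open Matrix

/-- Explicit form of the Robin-weight matrix `L = c((I - M)⁻¹ - I)` of the semismooth
Newton update at a converged sliding state: `I - M` is invertible and
`L = ζ (I - v vᵀ / ‖v‖²)`; in particular `L` is symmetric positive semidefinite,
`L v = 0`, and `L x = ζ x` for every `x` orthogonal to `v`. -/
theorem robin_weight_matrix_at_converged_sliding_state
    (n : ℕ) (hn : 1 ≤ n) (c : ℝ) (hc : 0 < c)
    (v : EuclideanSpace ℝ (Fin n)) (hv : v ≠ 0)
    (ζ : ℝ) (hζ : 0 < ζ)
    (lamτ : EuclideanSpace ℝ (Fin n)) (hlam : lamτ = -ζ • v)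
    (b : ℝ) (hb : b = ‖lamτ‖)
    (w : EuclideanSpace ℝ (Fin n)) (hw : w = -lamτ + c • v)
    (Q : Matrix (Fin n) (Fin n) ℝ)
    (hQ : Q = (1 / (b * ‖w‖)) •
      Matrix.vecMulVec (fun i => (-lamτ) i) (fun j => w j))
    (e : ℝ) (he : e = b / ‖w‖)
    (M : Matrix (Fin n) (Fin n) ℝ) (hM : M = e • ((1 : Matrix (Fin n) (Fin n) ℝ) - Q))
    (L : Matrix (Fin n) (Fin n) ℝ)
    (hL : L = c • (((1 : Matrix (Fin n) (Fin n) ℝ) - M)⁻¹ -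
      (1 : Matrix (Fin n) (Fin n) ℝ))) :
    IsUnit ((1 : Matrix (Fin n) (Fin n) ℝ) - M) ∧
      L = ζ • ((1 : Matrix (Fin n) (Fin n) ℝ) -
        (1 / ‖v‖ ^ 2) • Matrix.vecMulVec (fun i => v i) (fun j => v j)) ∧
      L.IsSymm ∧ L.PosSemidef ∧
      L *ᵥ (fun i => v i) = 0 ∧
      (∀ x : EuclideanSpace ℝ (Fin n), ⟪x, v⟫ = 0 →
        L *ᵥ (fun i => x i) = fun i => ζ * x i) := by
  have hv0 : 0 < ‖v‖ := norm_pos_iff.mpr hv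
  have hwv : w = (ζ + c) • v := by
    rw [hw, hlam, add_smul, neg_smul, neg_neg]
  have hbv : b = ζ * ‖v‖ := by
    rw [hb, hlam, norm_smul, norm_neg, Real.norm_of_nonneg hζ.le]
  have hwn : ‖w‖ = (ζ + c) * ‖v‖ := by
    rw [hwv, norm_smul, Real.norm_of_nonneg (by positivity)]
  have hvv : (fun i => v i) ⬝ᵥ (fun i => v i) = ‖v‖ ^ 2 := by
    rw [EuclideanSpace.real_norm_sq_eq]
    simp [dotProduct, sq]
  obtain ⟨P, hP⟩ : ∃ P : Matrix (Fin n) (Fin n) ℝ,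
    P = (1 / ‖v‖ ^ 2) • Matrix.vecMulVec (fun i => v i) (fun j => v j) := ⟨_, rfl⟩
  have hPx : ∀ x : Fin n → ℝ, P *ᵥ x =
      ((1 / ‖v‖ ^ 2) * ((fun i => v i) ⬝ᵥ x)) • (fun i => v i) := by
    intro x
    rw [hP, Matrix.smul_mulVec, Matrix.vecMulVec_mulVec]
    ext i
    simp
    ring
  have hPP : P * P = P := by
    apply Matrix.ext_of_mulVec_single
    intro i
    rw [← Matrix.mulVec_mulVec, hPx (Pi.single i 1), Matrix.mulVec_smul, hPx, hvv,
      one_div_mul_cancel (by positivity), one_smul]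
  have hPT : Pᵀ = P := by
    rw [hP, Matrix.transpose_smul, Matrix.transpose_vecMulVec]
  have hQP : Q = P := by
    rw [hQ, hP, hbv, hwn, hwv, hlam]
    ext i j
    simp [Matrix.vecMulVec_apply]
    field_simp
  have heq : e = ζ / (ζ + c) := by
    rw [he, hbv, hwn]
    field_simp
  have hR : (1 - P) * (1 - P) = 1 - P := by
    rw [sub_mul, mul_sub, mul_sub, hPP]; simp
  have hinv : (1 - M) * (1 + (ζ / c) • (1 - P)) = 1 := by
    rw [hM, hQP, heq, sub_mul, mul_add, mul_add, Matrix.smul_mul, Matrix.mul_smul, Matrix.smul_mul, Matrix.mul_smul, hR]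
    simp only [mul_one, one_mul]
    generalize 1 - P = R
    have : ζ / c - ζ / (ζ + c) - (ζ / c) * (ζ / (ζ + c)) = 0 := by
      field_simp; ring
    ext i j
    simp only [Matrix.add_apply, Matrix.sub_apply, Matrix.smul_apply, smul_eq_mul]
    linear_combination (R i j) * this
  have hLP : L = ζ • (1 - P) := by
    rw [hL, Matrix.inv_eq_right_inv hinv, add_sub_cancel_left, smul_smul, mul_div_cancel₀ _ hc.ne']
  have hRT : (1 - P)ᵀ = 1 - P := by
    rw [Matrix.transpose_sub, hPT, Matrix.transpose_one]
  refine ⟨IsUnit.of_mul_eq_one _ hinv, by rw [hLP, hP], ?_, ?_, ?_, ?_⟩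
  · rw [Matrix.IsSymm, hLP, Matrix.transpose_smul, hRT]
  · rw [hLP]
    have h := Matrix.posSemidef_conjTranspose_mul_self (1 - P)
    rw [Matrix.conjTranspose_eq_transpose_of_trivial, hRT, hR] at h
    exact h.smul hζ.le
  · rw [hLP, Matrix.smul_mulVec, Matrix.sub_mulVec, hPx, hvv,
      one_div_mul_cancel (by positivity), one_smul, Matrix.one_mulVec, sub_self, smul_zero]
  · intro x hx
    have hx' : (fun i => v i) ⬝ᵥ (fun i => x i) = 0 := by
      rw [← hx]
      simp [dotProduct, PiLp.inner_apply]
    rw [hLP, Matrix.smul_mulVec, Matrix.sub_mulVec, hPx, hx', mul_zero, zero_smul,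
      Matrix.one_mulVec, sub_zero]
    rfl
end

section
/- Let d ≥ 1 and let v_0, v_1, …, v_d be d + 1 affinely independent points in Euclidean space ℝᵈ. For each i ∈ {0, …, d}, let F_i be the convex hull of {v_j : j ≠ i} (the facet opposite v_i), let m_i be its (d−1)-dimensional Hausdorff measure, and let n_i ∈ ℝᵈ be the outward unit normal of F_i, i.e., the unit vector orthogonal to v_j − v_k for all j, k ≠ i and satisfying ⟨n_i, v_i − v_j⟩ < 0 for every j ≠ i. Then Σ_{i=0}^{d} m_i · n_i = 0. -/
open scoped MeasureTheory RealInnerProductSpace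
open MeasureTheory

lemma slice_aux {d : ℕ} (p n : EuclideanSpace ℝ (Fin d)) (hn : ‖n‖ = 1) (h : ℝ) (hh : 0 < h)
    (S : Set (EuclideanSpace ℝ (Fin d))) (hSf : S.Finite) (hS : S.Nonempty)
    (hSn : ∀ z ∈ S, ⟪n, z - p⟫ = h) :
    (μHE[d] : Measure (EuclideanSpace ℝ (Fin d))) (convexHull ℝ (insert p S)) =
      ENNReal.ofReal h * ((∫⁻ x in Set.Ioc (0 : ℝ) 1, (‖x‖ₑ ^ (d - 1))) *
        μHE[d - 1] (convexHull ℝ S)) := by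
  have hF : ∀ z ∈ convexHull ℝ S, ⟪n, z - p⟫ = h := by
    intro z hz
    have hc : Convex ℝ {z : EuclideanSpace ℝ (Fin d) | ⟪n, z - p⟫ = h} := by
      intro a ha b hb s t hs ht hst
      simp only [Set.mem_ofPred_eq, inner_sub_right, inner_add_right, inner_smul_right] at *
      have : t = 1 - s := by linarith
      subst this
      linear_combination s * ha + (1 - s) * hb
    exact convexHull_min hSn hc hz
  have hnn : ⟪n, n⟫ = 1 := by rw [real_inner_self_eq_norm_sq, hn]; norm_num
  have hn0 : h • n ≠ 0 := by
    intro h0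
    rcases smul_eq_zero.1 h0 with h1 | h1
    · exact hh.ne' h1
    · rw [h1] at hn; simp at hn
  have hT : MeasurableSet (convexHull ℝ (insert p S)) :=
    ((hSf.insert p).isCompact_convexHull (𝕜 := ℝ)).isClosed.measurableSet
  have key := EuclideanGeometry.euclideanHausdorffMeasure_eq_lintegral p hn0 hT
  rw [finrank_euclideanSpace_fin] at key
  rw [key]
  have hnorm : ‖h • n‖ₑ = ENNReal.ofReal h := by
    rw [← ofReal_norm, norm_smul, hn, mul_one, Real.norm_of_nonneg hh.le]
  rw [hnorm]
  congr 1
  have hmem : ∀ (x : ℝ) (y : EuclideanSpace ℝ (Fin d)),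
      y ∈ AffineSubspace.mk' (x • (h • n) +ᵥ p) (Submodule.span ℝ {h • n})ᗮ ↔
        ⟪n, y - p⟫ = x * h := by
    intro x y
    rw [AffineSubspace.mem_mk', Submodule.mem_orthogonal_singleton_iff_inner_right]
    simp only [vsub_eq_sub, vadd_eq_add, inner_smul_left, inner_sub_right, inner_add_right,
      inner_smul_right, hnn]
    simp only [conj_trivial]
    constructor <;> intro H
    · apply mul_left_cancel₀ hh.ne'
      linarith
    · linear_combination h * H
  have hslice : ∀ x : ℝ, x ≠ 0 → (μHE[d - 1] : Measure (EuclideanSpace ℝ (Fin d)))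
      (convexHull ℝ (insert p S) ∩
        AffineSubspace.mk' (x • (h • n) +ᵥ p) (Submodule.span ℝ {h • n})ᗮ) =
      (Set.Ioc (0 : ℝ) 1).indicator
        (fun x => ‖x‖ₑ ^ (d - 1) * μHE[d - 1] (convexHull ℝ S)) x := by
    intro x hx
    have hpar : ∀ y ∈ convexHull ℝ (insert p S), ∃ t ∈ Set.Icc (0 : ℝ) 1,
        ∃ z ∈ convexHull ℝ S, y = AffineMap.homothety p t z := by
      intro y hy
      rw [convexHull_insert hS, mem_convexJoin] at hy
      obtain ⟨a, rfl, z, hz, hy⟩ := hy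
      rw [segment_eq_image_lineMap] at hy
      obtain ⟨t, ht, rfl⟩ := hy
      exact ⟨t, ht, z, hz, by rw [AffineMap.homothety_eq_lineMap]⟩
    have hin : ∀ (t : ℝ), ∀ z ∈ convexHull ℝ S,
        ⟪n, AffineMap.homothety p t z - p⟫ = t * h := by
      intro t z hz
      rw [AffineMap.homothety_apply, ← hF z hz]
      simp [inner_smul_right]
    by_cases hx1 : x ∈ Set.Ioc (0 : ℝ) 1
    · rw [Set.indicator_of_mem hx1]
      have : convexHull ℝ (insert p S) ∩
        AffineSubspace.mk' (x • (h • n) +ᵥ p) (Submodule.span ℝ {h • n})ᗮ =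
          AffineMap.homothety p x '' convexHull ℝ S := by
        ext y
        constructor
        · rintro ⟨hy, hy2⟩
          obtain ⟨t, ht, z, hz, rfl⟩ := hpar y hy
          have h2 := (hmem _ _).1 hy2
          rw [hin t z hz] at h2
          have := mul_right_cancel₀ hh.ne' h2
          subst this
          exact ⟨z, hz, rfl⟩
        · rintro ⟨z, hz, rfl⟩
          refine ⟨?_, (hmem _ _).2 (hin x z hz)⟩
          rw [convexHull_insert hS, mem_convexJoin]
          refine ⟨p, rfl, z, hz, ?_⟩
          rw [segment_eq_image_lineMap]
          exact ⟨x, ⟨hx1.1.le, hx1.2⟩, by rw [AffineMap.homothety_eq_lineMap]⟩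
      rw [this, euclideanHausdorffMeasure_homothety_image _ _ hx, ENNReal.smul_def, smul_eq_mul]
      push_cast
      rfl
    · rw [Set.indicator_of_notMem hx1]
      refine (congrArg _ ?_).trans (measure_empty (μ := μHE[d - 1]))
      rw [Set.eq_empty_iff_forall_notMem]
      rintro y ⟨hy, hy2⟩
      obtain ⟨t, ht, z, hz, rfl⟩ := hpar y hy
      have h2 := (hmem _ _).1 hy2
      rw [hin t z hz] at h2
      have := mul_right_cancel₀ hh.ne' h2
      subst this
      exact hx1 ⟨lt_of_le_of_ne ht.1 (Ne.symm hx), ht.2⟩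
  have hae : ∀ᵐ x : ℝ, x ≠ 0 := by
    simp [ae_iff]
  rw [lintegral_congr_ae (hae.mono hslice), lintegral_indicator measurableSet_Ioc,
    lintegral_mul_const]
  fun_prop

/-- Discrete Gauss (Minkowski) relation for a nondegenerate simplex: the sum over its
facets of the `(d-1)`-dimensional Hausdorff measure of the facet times its outward unit
normal vector vanishes. -/
theorem simplex_facet_normals_sum_zero
    (d : ℕ) (hd : 1 ≤ d)
    (v : Fin (d + 1) → EuclideanSpace ℝ (Fin d))
    (hv : AffineIndependent ℝ v)
    (m : Fin (d + 1) → ℝ)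
    (hm : ∀ i, m i =
      (μH[(d : ℝ) - 1] (convexHull ℝ (v '' {j | j ≠ i}))).toReal)
    (nvec : Fin (d + 1) → EuclideanSpace ℝ (Fin d))
    (hunit : ∀ i, ‖nvec i‖ = 1)
    (horth : ∀ i j k, j ≠ i → k ≠ i → ⟪nvec i, v j - v k⟫ = 0)
    (hout : ∀ i j, j ≠ i → ⟪nvec i, v i - v j⟫ < 0) :
    ∑ i, m i • nvec i = 0 := by
  have hex : ∀ i : Fin (d + 1), ∃ j, j ≠ i := by
    have : Nontrivial (Fin (d + 1)) := Fin.nontrivial_iff_two_le.2 (by omega)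
    exact fun i => exists_ne i
  choose o ho using hex
  obtain ⟨h, hh⟩ : ∃ h : Fin (d + 1) → ℝ, ∀ i, h i = ⟪nvec i, v (o i) - v i⟫ := ⟨_, fun _ => rfl⟩
  have hinn : ∀ i j, j ≠ i → ⟪nvec i, v j - v i⟫ = h i := by
    intro i j hj
    have := horth i j (o i) hj (ho i)
    rw [hh]
    rw [inner_sub_right] at *
    rw [inner_sub_right]
    linarith
  have hpos : ∀ i, 0 < h i := by
    intro i
    have := hout i (o i) (ho i)
    rw [hh]
    rw [inner_sub_right] at *
    linarith
  have hconst : ∃ C : ℝ, ∀ i, h i * m i = C := by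
    set c := Measure.addHaarScalarFactor (volume : Measure (EuclideanSpace ℝ (Fin (d - 1))))
      μH[((d - 1 : ℕ) : ℝ)] with hc
    have hc0 : c ≠ 0 := Measure.addHaarScalarFactor_volume_hausdorffMeasure_ne_zero (d - 1)
    set I := ∫⁻ x in Set.Ioc (0 : ℝ) 1, (‖x‖ₑ ^ (d - 1)) with hI
    have hI0 : I ≠ 0 := by
      rw [hI, ← pos_iff_ne_zero, lintegral_pos_iff_support (by fun_prop),
        Measure.restrict_apply' measurableSet_Ioc]
      have : Set.Ioc (0 : ℝ) 1 ⊆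
          Function.support (fun x : ℝ => ‖x‖ₑ ^ (d - 1)) ∩ Set.Ioc (0 : ℝ) 1 := by
        intro x hx
        refine ⟨?_, hx⟩
        simp [hx.1.ne']
      refine lt_of_lt_of_le ?_ (measure_mono this)
      simp
    have hI1 : I ≠ ⊤ := by
      have : I ≤ ∫⁻ x in Set.Ioc (0 : ℝ) 1, 1 := by
        refine setLIntegral_mono (by fun_prop) ?_
        intro x hx
        refine pow_le_one' ?_ _
        rw [← ofReal_norm, Real.norm_of_nonneg hx.1.le]
        simpa using hx.2
      refine ne_top_of_le_ne_top ?_ this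
      simp
    have hcI : I.toReal * c ≠ 0 :=
      mul_ne_zero (ENNReal.toReal_ne_zero.2 ⟨hI0, hI1⟩) (by exact_mod_cast hc0)
    refine ⟨(μHE[d] (convexHull ℝ (Set.range v))).toReal / (I.toReal * c), fun i => ?_⟩
    rw [eq_div_iff hcI]
    have hr : Set.range v = insert (v i) (v '' {j | j ≠ i}) := by
      rw [← Set.image_insert_eq, ← Set.image_univ]
      congr 1
      ext j
      simp [em]
    rw [hr, slice_aux (v i) (nvec i) (hunit i) (h i) (hpos i) (v '' {j | j ≠ i}) (Set.toFinite _)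
      ⟨_, o i, ho i, rfl⟩ (by rintro _ ⟨j, hj, rfl⟩; exact hinn i j hj), hm,
      Measure.euclideanHausdorffMeasure_def, Measure.smul_apply, ENNReal.smul_def, smul_eq_mul,
      ENNReal.toReal_mul, ENNReal.toReal_mul, ENNReal.toReal_mul,
      ENNReal.toReal_ofReal (hpos i).le, ← hc, ← hI, Nat.cast_sub hd, Nat.cast_one,
      ENNReal.coe_toReal]
    ring
  obtain ⟨C, hC⟩ := hconst
  have hin0 : ∀ k l, ⟪∑ i, m i • nvec i, v k - v l⟫ = 0 := by
    intro k l
    have : ∀ i, ⟪m i • nvec i, v k - v l⟫ = (if i = l then C else 0) - (if i = k then C else 0) := by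
      intro i
      rw [real_inner_smul_left]
      have e : ∀ k, ⟪nvec i, v k - v i⟫ = if i = k then 0 else h i := by
        intro k
        split_ifs with hk
        · simp [hk]
        · exact hinn i k (Ne.symm hk)
      have : v k - v l = (v k - v i) - (v l - v i) := by abel
      rw [this, inner_sub_right, e, e, ← hC i]
      split_ifs <;> ring
    rw [sum_inner, Finset.sum_congr rfl fun i _ => this i]
    simp
  have hspan : vectorSpan ℝ (Set.range v) = ⊤ := by
    apply hv.vectorSpan_eq_top_of_card_eq_finrank_add_one
    simp
  have hle : vectorSpan ℝ (Set.range v) ≤ (Submodule.span ℝ {∑ i, m i • nvec i})ᗮ := by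
    rw [vectorSpan, Submodule.span_le]
    rintro _ ⟨_, ⟨k, rfl⟩, _, ⟨l, rfl⟩, rfl⟩
    rw [SetLike.mem_coe, Submodule.mem_orthogonal_singleton_iff_inner_right]
    exact hin0 k l
  rw [hspan] at hle
  have := hle (Submodule.mem_top (x := ∑ i, m i • nvec i))
  rw [Submodule.mem_orthogonal_singleton_iff_inner_right] at this
  exact inner_self_eq_zero.1 this
end
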